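/- arXiv:2412.15820 — 2 statements merged into one kernel-verified Lean document; each statement's English description precedes it below -/
import Mathlib

section
/- Let (Ω, 𝔽, P) be a probability space and Z : Ω → ℝ a random variable. Let N > 0, C > 0 and κ > 0 be real constants with C·κ·e^{C·κ} ≤ 1/2. Assume that for every α ∈ (0, κ], the random variables exp(α·N·Z) and exp(−α·N·Z) are integrable with E[exp(α·N·Z)] ≤ exp(C·e^{C·α}·(α²·N + α)) and E[exp(−α·N·Z)] ≤ exp(C·e^{C·α}·(α²·N + α)). Then for every u > 0, P(|Z| ≥ u) ≤ 2·e^{1/2} · exp(− N·κ·u² / (2·(1+u))), i.e. the concentration bound of Corollary 2.3 holds with c = κ/2 and prefactor 2·e^{1/2}. -/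
/-!
Chernoff's bound at `t = α N` gives `P(X ≥ u) ≤ exp(-α N u + K (α² N + α))` with `K = C e^{Cα}`,
for `X = Z` and for `X = -Z`. Take `α = κ s` with `s = u / (1 + u) ∈ (0, 1)`. As `α ≤ κ`,
the smallness condition gives `K κ ≤ 1/2`, hence `K α ≤ s / 2 ≤ 1 / 2` (the constant factor
`e^{1/2}`) and `K α² N ≤ N κ s² / 2 ≤ N κ s u / 2` by `s ≤ u`, which is half of the gain `α N u`.
The exponent is therefore at most `1/2 - N κ s u / 2`, and a union bound over the two tails
gives the factor `2`.
-/

open MeasureTheory ProbabilityTheory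
open scoped ProbabilityTheory

/-- The estimate of the Chernoff exponent at `α = κ u / (1 + u)`. -/
lemma chernoff_exponent_le {N C κ u : ℝ} (hN : 0 < N) (hC : 0 < C) (hκ : 0 < κ)
    (hCκ : C * κ * Real.exp (C * κ) ≤ 1 / 2) (hu : 0 < u) {α : ℝ}
    (hα : α = κ * (u / (1 + u))) :
    -(α * N) * u + C * Real.exp (C * α) * (α ^ 2 * N + α) ≤
      1 / 2 + -(N * κ * u ^ 2) / (2 * (1 + u)) := by
  obtain ⟨s, hs⟩ : ∃ s, s = u / (1 + u) := ⟨_, rfl⟩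
  have hs0 : 0 < s := by rw [hs]; positivity
  have hs1 : s ≤ 1 := by rw [hs, div_le_one (by positivity)]; linarith
  have hsu : s ≤ u := by rw [hs]; exact div_le_self hu.le (by linarith)
  rw [← hs] at hα
  have hακ : α ≤ κ := by rw [hα]; exact mul_le_of_le_one_right hκ.le hs1
  obtain ⟨K, hK⟩ : ∃ K, K = C * Real.exp (C * α) := ⟨_, rfl⟩
  have hKκ : K * κ ≤ 1 / 2 := by
    calc K * κ ≤ C * Real.exp (C * κ) * κ := by rw [hK]; gcongr
      _ = C * κ * Real.exp (C * κ) := by ring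
      _ ≤ 1 / 2 := hCκ
  have hlin : K * α ≤ 1 / 2 := by
    calc K * α = K * κ * s := by rw [hα]; ring
      _ ≤ 1 / 2 * 1 := by gcongr
      _ = 1 / 2 := by norm_num
  have hquad : K * (α ^ 2 * N) ≤ N * κ * s * u / 2 := by
    calc K * (α ^ 2 * N) = K * κ * (N * κ * s * s) := by rw [hα]; ring
      _ ≤ 1 / 2 * (N * κ * s * u) := by gcongr
      _ = N * κ * s * u / 2 := by ring
  have hrate : -(N * κ * u ^ 2) / (2 * (1 + u)) = -(N * κ * s * u / 2) := by
    rw [hs]; field_simp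
  rw [hrate, ← hK]
  have hgain : α * N * u = N * κ * s * u := by rw [hα]; ring
  linarith

/-- Chernoff's bound at `α = κ u / (1 + u)`, for one tail. -/
lemma one_sided_chernoff_bound {Ω : Type*} [MeasureSpace Ω]
    [IsProbabilityMeasure (ℙ : Measure Ω)] (X : Ω → ℝ) {N C κ u : ℝ}
    (hN : 0 < N) (hC : 0 < C) (hκ : 0 < κ)
    (hCκ : C * κ * Real.exp (C * κ) ≤ 1 / 2) (hu : 0 < u) {α : ℝ}
    (hα : α = κ * (u / (1 + u)))
    (hint : Integrable (fun ω => Real.exp (α * N * X ω)))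
    (hmom : (∫ ω, Real.exp (α * N * X ω)) ≤
        Real.exp (C * Real.exp (C * α) * (α ^ 2 * N + α))) :
    (ℙ : Measure Ω).real {ω | u ≤ X ω} ≤
      Real.exp (1 / 2) * Real.exp (-(N * κ * u ^ 2) / (2 * (1 + u))) := by
  have hα0 : 0 ≤ α * N := by rw [hα]; positivity
  calc (ℙ : Measure Ω).real {ω | u ≤ X ω}
      ≤ Real.exp (-(α * N) * u) * mgf X ℙ (α * N) :=
        measure_ge_le_exp_mul_mgf u hα0 hint
    _ ≤ Real.exp (-(α * N) * u) * Real.exp (C * Real.exp (C * α) * (α ^ 2 * N + α)) := by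
        gcongr; exact hmom
    _ ≤ _ := by
        rw [← Real.exp_add, ← Real.exp_add, Real.exp_le_exp]
        exact chernoff_exponent_le hN hC hκ hCκ hu hα

/-- Two-sided concentration inequality (Corollary 2.3 of the paper): if the
exponential moments of `±N·Z` satisfy the bound of Theorem 2.2 for all
`α ∈ (0, κ]`, with `C·κ·e^{C·κ} ≤ 1/2`, then
`P(|Z| ≥ u) ≤ 2·e^{1/2} · exp(− N·κ·u² / (2·(1+u)))` for every `u > 0`. -/
theorem two_sided_chernoff_bound
    {Ω : Type*} [MeasureSpace Ω] [IsProbabilityMeasure (ℙ : Measure Ω)]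
    (Z : Ω → ℝ) (N C κ : ℝ) (hN : 0 < N) (hC : 0 < C) (hκ : 0 < κ)
    (hCκ : C * κ * Real.exp (C * κ) ≤ 1 / 2)
    (hint : ∀ α : ℝ, 0 < α → α ≤ κ →
      Integrable (fun ω => Real.exp (α * N * Z ω)))
    (hint' : ∀ α : ℝ, 0 < α → α ≤ κ →
      Integrable (fun ω => Real.exp (- α * N * Z ω)))
    (hmom : ∀ α : ℝ, 0 < α → α ≤ κ →
      (∫ ω, Real.exp (α * N * Z ω)) ≤
        Real.exp (C * Real.exp (C * α) * (α ^ 2 * N + α)))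
    (hmom' : ∀ α : ℝ, 0 < α → α ≤ κ →
      (∫ ω, Real.exp (- α * N * Z ω)) ≤
        Real.exp (C * Real.exp (C * α) * (α ^ 2 * N + α)))
    (u : ℝ) (hu : 0 < u) :
    (ℙ {ω | |Z ω| ≥ u}).toReal ≤
      2 * Real.exp (1 / 2) * Real.exp (- (N * κ * u ^ 2) / (2 * (1 + u))) := by
  obtain ⟨α, hα⟩ : ∃ α, α = κ * (u / (1 + u)) := ⟨_, rfl⟩
  have hα0 : 0 < α := by rw [hα]; positivity
  have hακ : α ≤ κ := by
    rw [hα]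
    exact mul_le_of_le_one_right hκ.le ((div_le_one (by positivity)).2 (by linarith))
  have hneg : ∀ ω, α * N * (-Z ω) = -α * N * Z ω := fun ω => by ring
  have hupper := one_sided_chernoff_bound Z hN hC hκ hCκ hu hα
    (hint α hα0 hακ) (hmom α hα0 hακ)
  have hlower := one_sided_chernoff_bound (fun ω => -Z ω) hN hC hκ hCκ hu hα
    (by simpa only [hneg] using hint' α hα0 hακ)
    (by simpa only [hneg] using hmom' α hα0 hακ)
  have hset : {ω | |Z ω| ≥ u} = {ω | u ≤ Z ω} ∪ {ω | u ≤ -Z ω} := by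
    ext ω
    exact le_abs (a := u) (b := Z ω)
  have hunion := measureReal_union_le (μ := (ℙ : Measure Ω)) {ω | u ≤ Z ω} {ω | u ≤ -Z ω}
  rw [← hset] at hunion
  change (ℙ : Measure Ω).real {ω | |Z ω| ≥ u} ≤ _
  linarith
end

section
/- Let E be a measurable space and let N ≥ 2 be an integer. Let η₀ be a finite nonnegative measure on E with total mass η₀(E) ≥ (N−1)/N, let x, x' ∈ E, and set η := η₀ + (1/N)·δ_x, η̃ := η₀ + (1/N)·δ_{x'}. Let g, q : E → ℝ be bounded measurable, and let r > 0, 0 < c ≤ C, M ≥ 0 be constants with r·c ≤ q(y) ≤ r·C and |g(y)| ≤ M·q(y) for all y ∈ E. Write μ(φ) := ∫ φ dμ, ν(φ) := φ(x') − φ(x), Φ(μ) := μ(g)/μ(q), and D := ν(g)/η(q) − (η(g)/η(q)²)·ν(q). Then the second-order discrete derivative satisfies | 2N·( N·(Φ(η̃) − Φ(η)) − D ) | ≤ 6·M·(C²/c²)·(N/(N−1))². -/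
/-! With `A = η(g)`, `B = η(q)`, `a = ν(g)`, `b = ν(q)`, moving the particle from `x` to `x'` replaces
`A` by `A + a / N` and `B` by `B + b / N =: B'`. For a ratio the second-order remainder is explicit:
`2N (N ((A + a / N) / B' - A / B) - D) = -2 b (a - (A / B) b) / (B B')` (`second_difference_ratio`).
The numerator is controlled by `|b| ≤ rC`, `|a| ≤ 2MrC` and `|A / B| ≤ M`, the denominator by
`B, B' ≥ η₀(q) ≥ rc (N - 1) / N`, since both measures dominate `η₀`. -/

open MeasureTheory
open scoped ENNReal

theorem second_difference_ratio {n A B a b : ℝ} (hn : n ≠ 0) (hB : B ≠ 0)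
    (hB' : B + b / n ≠ 0) :
    2 * n * (n * ((A + a / n) / (B + b / n) - A / B) - (a / B - A / B ^ 2 * b)) =
      -(2 * b * (a - A / B * b)) / (B * (B + b / n)) := by
  have h : (A + a / n) / (B + b / n) - A / B = (a * B - A * b) / (n * B * (B + b / n)) := by
    rw [div_sub_div _ _ hB' hB, div_eq_div_iff (mul_ne_zero hB' hB)
      (mul_ne_zero (mul_ne_zero hn hB) hB')]
    field_simp
    ring
  rw [h]
  generalize hP : B + b / n = P at *
  have hb : b = n * (P - B) := by rw [← hP]; field_simp; ring
  subst hb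
  field_simp
  ring

theorem integral_add_inv_smul_dirac {E : Type*} [MeasurableSpace E] (N : ℕ) (hN : N ≠ 0)
    (x : E) (μ : Measure E) {f : E → ℝ} (hf : Measurable f) (hi : Integrable f μ) :
    ∫ y, f y ∂(μ + (N : ℝ≥0∞)⁻¹ • Measure.dirac x) = ∫ y, f y ∂μ + f x / N := by
  have hd : Integrable f (Measure.dirac x) :=
    integrable_dirac' hf.stronglyMeasurable (by simp)
  rw [integral_add_measure hi (hd.smul_measure (by simpa using hN)), integral_smul_measure,
    integral_dirac' f x hf.stronglyMeasurable]
  simp [div_eq_inv_mul]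

/-- Second bound of Lemma 4.9 of the paper, with the factor `(N/(N−1))²` from
the removed particle made explicit: under the uniform bounds
`r·c ≤ q ≤ r·C`, `|g| ≤ M·q`, and `η₀(E) ≥ (N−1)/N`, the second-order
discrete derivative of the normalized ratio satisfies
`|2N·(N·(Φ(η̃) − Φ(η)) − D)| ≤ 6·M·(C²/c²)·(N/(N−1))²`. -/
theorem second_discrete_derivative_uniform_bound
    {E : Type*} [MeasurableSpace E]
    (N : ℕ) (hN : 2 ≤ N) (x x' : E)
    (η₀ : Measure E) [IsFiniteMeasure η₀]
    (hmass : ((N : ℝ) - 1) / N ≤ (η₀ Set.univ).toReal)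
    (η ηt : Measure E)
    (hη : η = η₀ + (N : ℝ≥0∞)⁻¹ • Measure.dirac x)
    (hηt : ηt = η₀ + (N : ℝ≥0∞)⁻¹ • Measure.dirac x')
    (g q : E → ℝ) (hg : Measurable g) (hq : Measurable q)
    (r c C M : ℝ) (hr : 0 < r) (hc : 0 < c) (hcC : c ≤ C) (hM : 0 ≤ M)
    (hql : ∀ y, r * c ≤ q y) (hqu : ∀ y, q y ≤ r * C)
    (hgq : ∀ y, |g y| ≤ M * q y)
    (D : ℝ)
    (hD : D = (g x' - g x) / (∫ y, q y ∂η) -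
      ((∫ y, g y ∂η) / (∫ y, q y ∂η) ^ 2) * (q x' - q x)) :
    |2 * (N : ℝ) * ((N : ℝ) * ((∫ y, g y ∂ηt) / (∫ y, q y ∂ηt) -
        (∫ y, g y ∂η) / (∫ y, q y ∂η)) - D)| ≤
      6 * M * (C ^ 2 / c ^ 2) * ((N : ℝ) / ((N : ℝ) - 1)) ^ 2 := by
  have hN' : (2 : ℝ) ≤ N := by exact_mod_cast hN
  have hn : (0 : ℝ) < N := by linarith
  have hn1 : (0 : ℝ) < (N : ℝ) - 1 := by linarith
  have hrc : 0 < r * c := mul_pos hr hc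
  have hq0 : ∀ y, 0 < q y := fun y => hrc.trans_le (hql y)
  have hgC : ∀ y, |g y| ≤ M * (r * C) := fun y =>
    (hgq y).trans (mul_le_mul_of_nonneg_left (hqu y) hM)
  have hqi : Integrable q η₀ := Integrable.of_bound hq.aestronglyMeasurable (r * C)
    (.of_forall fun y => by rw [Real.norm_eq_abs, abs_of_pos (hq0 y)]; exact hqu y)
  have hgi : Integrable g η₀ := Integrable.of_bound hg.aestronglyMeasurable (M * (r * C))
    (.of_forall hgC)
  have hlow : r * c * (((N : ℝ) - 1) / N) ≤ ∫ y, q y ∂η₀ := by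
    have h := integral_mono (integrable_const (μ := η₀) (r * c)) hqi hql
    rw [integral_const, smul_eq_mul, mul_comm] at h
    exact (mul_le_mul_of_nonneg_left hmass hrc.le).trans h
  have habs : |∫ y, g y ∂η₀| ≤ M * ∫ y, q y ∂η₀ := by
    rw [← integral_const_mul]
    exact (abs_integral_le_integral_abs).trans (integral_mono hgi.abs (hqi.const_mul M) hgq)
  have hN0 : N ≠ 0 := by omega
  rw [hD, hηt, hη]
  simp only [integral_add_inv_smul_dirac N hN0 _ η₀ hq hqi,
    integral_add_inv_smul_dirac N hN0 _ η₀ hg hgi]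
  generalize (∫ y, q y ∂η₀) = Q at *
  generalize (∫ y, g y ∂η₀) = G at *
  set K := r * c * (((N : ℝ) - 1) / N) with hK
  have hK0 : 0 < K := by positivity
  have hB : K ≤ Q + q x / N := hlow.trans (le_add_of_nonneg_right (div_pos (hq0 x) hn).le)
  have hB' : K ≤ Q + q x' / N := hlow.trans (le_add_of_nonneg_right (div_pos (hq0 x') hn).le)
  have hA : |G + g x / N| ≤ M * (Q + q x / N) := by
    have h1 : |g x / N| ≤ M * (q x / N) := by
      rw [abs_div, abs_of_pos hn, ← mul_div_assoc]
      exact div_le_div_of_nonneg_right (hgq x) hn.le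
    linarith [abs_add_le G (g x / N)]
  have eA : G + g x' / N = G + g x / N + (g x' - g x) / N := by ring
  have eB : Q + q x' / N = Q + q x / N + (q x' - q x) / N := by ring
  rw [eB] at hB' ⊢
  rw [eA]
  generalize G + g x / N = A at *
  generalize Q + q x / N = B at *
  have hB0 : 0 < B := hK0.trans_le hB
  have hB0' := hK0.trans_le hB'
  rw [second_difference_ratio hn.ne' hB0.ne' hB0'.ne']
  have hb : |q x' - q x| ≤ r * C :=
    abs_le.2 ⟨by linarith [hqu x, hq0 x'], by linarith [hqu x', hq0 x]⟩
  have ha : |g x' - g x| ≤ 2 * (M * (r * C)) := by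
    linarith [abs_sub (g x') (g x), hgC x, hgC x']
  have hΦ : |A / B| ≤ M := by
    rw [abs_div, abs_of_pos hB0]
    exact (div_le_iff₀ hB0).2 hA
  have hin : |(g x' - g x) - A / B * (q x' - q x)| ≤ 3 * (M * (r * C)) := by
    have h := abs_sub (g x' - g x) (A / B * (q x' - q x))
    rw [abs_mul] at h
    have := mul_le_mul hΦ hb (abs_nonneg _) hM
    linarith
  have hrC : 0 < r * C := mul_pos hr (hc.trans_le hcC)
  rw [abs_div, abs_neg, abs_mul, abs_mul, abs_two, abs_of_pos (mul_pos hB0 hB0')]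
  calc _ ≤ 2 * (r * C) * (3 * (M * (r * C))) / (K * K) := by gcongr
    _ = _ := by rw [hK]; field_simp; ring
end
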